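/- Let E be an elliptic curve over a finite field 𝔽_p and let a_p = p + 1 − #E(𝔽_p). Then |a_p| ≤ 2√p (Hasse bound). -/

import Mathlib

/-!
Let `P` be the generic point of `E`, a point of `E` over the function field `F(E)`, and `π` the
`q`-power Frobenius. On the points that the hyperelliptic involution maps to their negatives, the
`x`-coordinate lies in `F(X)`, and its degree is a height. This height satisfies the parallelogram
law exactly, because the map `(x(Q) x(R), x(Q) + x(R)) ↦ (x(Q+R) x(Q-R), x(Q+R) + x(Q-R))` is given
by quadratic forms without a common zero over any field. The height is thus a nonnegative quadratic
form, and the bound is the Cauchy–Schwarz inequality for `πP`, of height `q`, and `P`, of height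
`1`, once `πP - P` is shown to have height `#E(F)`.

For this last point, the denominators of `x(πP + P)` and `x(πP - P)` have product `(X ^ q - X) ^ 2`.
Its double zero at `x ∈ F` is also a double zero of the denominator of `x(πP - P)` if there are two
rational points above `x`, is split evenly between the two denominators if there is one, and belongs
to the other denominator if there is none. Hence the denominator of `x(πP - P)` has degree
`#E(F) - 1`, and its numerator has degree one more.
-/

namespace HasseBound

open Polynomial WeierstrassCurve WeierstrassCurve.Affine

section ParallelogramLaw

/-- The parallelogram law for an integer-valued function on an abelian group: the function is a
quadratic form. -/
def ParallelogramLaw {G : Type*} [AddCommGroup G] (h : G → ℤ) : Prop :=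
  ∀ x y, h (x + y) + h (x - y) = 2 * h x + 2 * h y

namespace ParallelogramLaw

open QuadraticMap (polar)

variable {G : Type*} [AddCommGroup G] {h : G → ℤ}

theorem map_zero (hpar : ParallelogramLaw h) : h 0 = 0 := by
  have := hpar 0 0
  rw [add_zero, sub_zero] at this
  omega

theorem polar_self (hpar : ParallelogramLaw h) (x : G) : polar h x x = 2 * h x := by
  have := hpar x x
  rw [sub_self, hpar.map_zero] at this
  rw [polar]
  omega

theorem polar_add_left (hpar : ParallelogramLaw h) (x x' y : G) :
    polar h (x + x') y = polar h x y + polar h x' y := by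
  have h₁ := hpar (x + y) x'
  have h₂ := hpar x (x' - y)
  have h₃ := hpar (x + x') y
  have h₄ := hpar x' y
  rw [add_right_comm] at h₁
  rw [show x + (x' - y) = x + x' - y by abel, show x - (x' - y) = x + y - x' by abel] at h₂
  simp only [polar]
  linarith

/-- The symmetric bilinear form `(x, y) ↦ h (x + y) - h x - h y`. -/
def bilinForm (hpar : ParallelogramLaw h) : LinearMap.BilinForm ℤ G :=
  (AddMonoidHom.mk' (fun x => (AddMonoidHom.mk' (polar h x) fun y y' => by
      simp only [QuadraticMap.polar_comm h x, hpar.polar_add_left]).toIntLinearMap) fun x x' => by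
    ext y
    exact hpar.polar_add_left x x' y).toIntLinearMap

theorem bilinForm_apply (hpar : ParallelogramLaw h) (x y : G) :
    hpar.bilinForm x y = h (x + y) - h x - h y :=
  rfl

theorem bilinForm_self (hpar : ParallelogramLaw h) (x : G) : hpar.bilinForm x x = 2 * h x :=
  hpar.polar_self x

theorem sq_le_four_mul (hpar : ParallelogramLaw h) (hnonneg : ∀ x, 0 ≤ h x) (x y : G) :
    (h x + h y - h (x - y)) ^ 2 ≤ 4 * h x * h y := by
  have hsymm : LinearMap.IsSymm hpar.bilinForm := ⟨QuadraticMap.polar_comm h⟩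
  have hB : ∀ z, 0 ≤ hpar.bilinForm z z := fun z => by
    rw [bilinForm_self]
    linarith [hnonneg z]
  have hxy : h x + h y - h (x - y) = hpar.bilinForm x y := by
    rw [bilinForm_apply]
    linarith [hpar x y]
  calc (h x + h y - h (x - y)) ^ 2 ≤ hpar.bilinForm x x * hpar.bilinForm y y :=
        hxy ▸ hpar.bilinForm.apply_sq_le_of_symm hB hsymm x y
    _ = 4 * h x * h y := by
        rw [bilinForm_self, bilinForm_self]
        ring

end ParallelogramLaw

end ParallelogramLaw

section ProdPow

variable {ι R : Type*} [CommSemiring R] {m : ℕ} {v : ι → R[X]}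

theorem natDegree_prod_pow_le (hv : ∀ i, (v i).natDegree ≤ m) (s : ι → ℕ) (t : Finset ι) :
    (∏ i ∈ t, v i ^ s i).natDegree ≤ (∑ i ∈ t, s i) * m := by
  rw [Finset.sum_mul]
  exact (natDegree_prod_le _ _).trans
    (Finset.sum_le_sum fun i _ => natDegree_pow_le_of_le (s i) (hv i))

theorem coeff_prod_pow (hv : ∀ i, (v i).natDegree ≤ m) (s : ι → ℕ) (t : Finset ι) :
    (∏ i ∈ t, v i ^ s i).coeff ((∑ i ∈ t, s i) * m) = ∏ i ∈ t, (v i).coeff m ^ s i := by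
  induction t using Finset.cons_induction with
  | empty => simp
  | cons i t hi ih =>
    rw [Finset.prod_cons, Finset.sum_cons, Finset.prod_cons, add_mul,
      coeff_mul_add_eq_of_natDegree_le (natDegree_pow_le_of_le _ (hv i))
        (natDegree_prod_pow_le hv s t), coeff_pow_of_natDegree_le (hv i), ih]

end ProdPow

section HomogeneousSubstitution

variable {ι R : Type*} [CommSemiring R] {d m : ℕ} {v : ι → R[X]} {φ : MvPolynomial ι R}

theorem sum_eq_of_mem_support (hφ : φ.IsHomogeneous d) {s : ι →₀ ℕ} (hs : s ∈ φ.support) :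
    ∑ i ∈ s.support, s i = d := by
  rw [← Finsupp.degree_apply, Finsupp.degree_eq_weight_one]
  exact hφ (MvPolynomial.mem_support_iff.mp hs)

theorem natDegree_aeval_le (hφ : φ.IsHomogeneous d) (hv : ∀ i, (v i).natDegree ≤ m) :
    (MvPolynomial.aeval v φ).natDegree ≤ d * m := by
  rw [MvPolynomial.aeval_def, MvPolynomial.eval₂_eq]
  refine natDegree_sum_le_of_forall_le _ _ fun s hs => (natDegree_C_mul_le _ _).trans ?_
  exact sum_eq_of_mem_support hφ hs ▸ natDegree_prod_pow_le hv s s.support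

theorem coeff_aeval (hφ : φ.IsHomogeneous d) (hv : ∀ i, (v i).natDegree ≤ m) :
    (MvPolynomial.aeval v φ).coeff (d * m) = MvPolynomial.eval (fun i => (v i).coeff m) φ := by
  rw [MvPolynomial.aeval_def, MvPolynomial.eval₂_eq, MvPolynomial.eval_eq, finsetSum_coeff]
  refine Finset.sum_congr rfl fun s hs => ?_
  rw [algebraMap_eq, coeff_C_mul, ← sum_eq_of_mem_support hφ hs, coeff_prod_pow hv]

end HomogeneousSubstitution

section MaxDegree

variable {ι R : Type*} [Fintype ι]

/-- The largest degree of the entries of a vector of polynomials (`0` for the zero vector). For a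
vector with coprime entries this is the degree of the map from the projective line it defines. -/
noncomputable def maxDegree [Semiring R] (v : ι → R[X]) : ℕ :=
  Finset.univ.sup fun i => (v i).natDegree

theorem natDegree_le_maxDegree [Semiring R] (v : ι → R[X]) (i : ι) :
    (v i).natDegree ≤ maxDegree v :=
  Finset.le_sup (f := fun i => (v i).natDegree) (Finset.mem_univ i)

theorem maxDegree_eq_of_coeff_ne_zero [Semiring R] {v : ι → R[X]} {n : ℕ}
    (hle : ∀ i, (v i).natDegree ≤ n) (hne : (fun i => (v i).coeff n) ≠ 0) : maxDegree v = n := by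
  obtain ⟨i, hi⟩ := Function.ne_iff.mp hne
  exact le_antisymm (Finset.sup_le fun i _ => hle i)
    ((le_natDegree_of_ne_zero hi).trans (natDegree_le_maxDegree v i))

theorem coeff_maxDegree_ne_zero [Semiring R] {v : ι → R[X]} (hv : v ≠ 0) :
    (fun i => (v i).coeff (maxDegree v)) ≠ 0 := by
  obtain ⟨j, hj⟩ := Function.ne_iff.mp hv
  obtain ⟨i, -, hi⟩ := Finset.exists_mem_eq_sup Finset.univ ⟨j, Finset.mem_univ j⟩
    fun i => (v i).natDegree
  by_cases hvi : v i = 0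
  · refine Function.ne_iff.mpr ⟨j, fun h => hj (leadingCoeff_eq_zero.mp ?_)⟩
    have hmax : maxDegree v = 0 := hi.trans (by rw [hvi, natDegree_zero])
    have hj0 : (v j).natDegree = 0 := Nat.le_zero.mp (hmax ▸ natDegree_le_maxDegree v j)
    rwa [leadingCoeff, hj0, ← hmax]
  · refine Function.ne_iff.mpr ⟨i, ?_⟩
    change (v i).coeff (maxDegree v) ≠ 0
    rw [maxDegree, hi]
    exact leadingCoeff_ne_zero.mpr hvi

theorem maxDegree_units_smul [CommRing R] [IsDomain R] (u : R[X]ˣ) (v : ι → R[X]) :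
    maxDegree (u • v) = maxDegree v := by
  refine Finset.sup_congr rfl fun i _ => ?_
  rw [Pi.smul_apply, Units.smul_def, smul_eq_mul]
  exact natDegree_eq_of_degree_eq (degree_eq_degree_of_associated ⟨u, mul_comm _ _⟩).symm

variable [CommSemiring R] {d : ℕ} {v : ι → R[X]}

/-- Taking coefficients in the top degree is the reduction at the point at infinity. -/
theorem maxDegree_aeval {κ : Type*} [Fintype κ] {F : κ → MvPolynomial ι R}
    (hF : ∀ j, (F j).IsHomogeneous d)
    (hF0 : ∀ x : ι → R, x ≠ 0 → (fun j => MvPolynomial.eval x (F j)) ≠ 0) (hv : v ≠ 0) :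
    maxDegree (fun j => MvPolynomial.aeval v (F j)) = d * maxDegree v := by
  refine maxDegree_eq_of_coeff_ne_zero
    (fun j => natDegree_aeval_le (hF j) (natDegree_le_maxDegree v)) ?_
  simp only [coeff_aeval (hF _) (natDegree_le_maxDegree v)]
  exact hF0 _ (coeff_maxDegree_ne_zero hv)

end MaxDegree

section SymProd

/-- The coefficients of the product of two binary linear forms; for representatives of two points
of the projective line, the coordinates of the corresponding point of its symmetric square. -/
def symProd {R : Type*} [CommSemiring R] (v w : Fin 2 → R) : Fin 3 → R :=
  ![v 0 * w 0, v 0 * w 1 + v 1 * w 0, v 1 * w 1]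

theorem map_symProd {R S : Type*} [CommSemiring R] [CommSemiring S] (f : R →+* S)
    (v w : Fin 2 → R) : f ∘ symProd v w = symProd (f ∘ v) (f ∘ w) := by
  ext i
  fin_cases i <;> simp [symProd]

theorem symProd_smul {R : Type*} [CommSemiring R] (c d : R) (v w : Fin 2 → R) :
    symProd (c • v) (d • w) = (c * d) • symProd v w := by
  ext i
  fin_cases i <;>
    simp only [symProd, Pi.smul_apply, smul_eq_mul, Fin.zero_eta, Fin.mk_one, Fin.reduceFinMk,
      Matrix.cons_val] <;>
    ring

theorem symProd_ne_zero {R : Type*} [CommRing R] [IsDomain R] {v w : Fin 2 → R}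
    (hv : v ≠ 0) (hw : w ≠ 0) : symProd v w ≠ 0 := by
  intro h
  have h₀ : v 0 * w 0 = 0 := congrFun h 0
  have h₁ : v 0 * w 1 + v 1 * w 0 = 0 := congrFun h 1
  have h₂ : v 1 * w 1 = 0 := congrFun h 2
  simp only [ne_eq, funext_iff, Fin.forall_fin_two, Pi.zero_apply] at hv hw
  rcases mul_eq_zero.mp h₀ with hv₀ | hw₀ <;> rcases mul_eq_zero.mp h₂ with hv₁ | hw₁ <;> simp_all

theorem maxDegree_symProd {R : Type*} [CommRing R] [IsDomain R] {v w : Fin 2 → R[X]}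
    (hv : v ≠ 0) (hw : w ≠ 0) :
    maxDegree (symProd v w) = maxDegree v + maxDegree w := by
  have hmul : ∀ i j, (v i * w j).natDegree ≤ maxDegree v + maxDegree w := fun i j =>
    natDegree_mul_le_of_le (natDegree_le_maxDegree v i) (natDegree_le_maxDegree w j)
  have hcoeff : ∀ i j, (v i * w j).coeff (maxDegree v + maxDegree w) =
      (v i).coeff (maxDegree v) * (w j).coeff (maxDegree w) := fun i j =>
    coeff_mul_add_eq_of_natDegree_le (natDegree_le_maxDegree v i) (natDegree_le_maxDegree w j)
  refine maxDegree_eq_of_coeff_ne_zero (fun i => ?_) ?_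
  · fin_cases i
    exacts [hmul 0 0, natDegree_add_le_of_degree_le (hmul 0 1) (hmul 1 0), hmul 1 1]
  · convert symProd_ne_zero (coeff_maxDegree_ne_zero hv) (coeff_maxDegree_ne_zero hw) with i
    fin_cases i <;> simp [symProd, hcoeff]

theorem maxDegree_eq_natDegree_add_one {R : Type*} [CommRing R] [IsDomain R] {v w : Fin 2 → R[X]}
    {n : ℕ} (h₀ : (symProd v w 0).natDegree = n + 2) (h₁ : (symProd v w 1).natDegree ≤ n + 1)
    (h₂ : (symProd v w 2).natDegree = n) (hne : symProd v w 2 ≠ 0) :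
    maxDegree w = (w 1).natDegree + 1 := by
  simp only [symProd, Matrix.cons_val] at h₀ h₁ h₂ hne
  obtain ⟨hv₁, hw₁⟩ := mul_ne_zero_iff.mp hne
  have hne₀ : v 0 * w 0 ≠ 0 := ne_zero_of_natDegree_gt (n := 0) (by omega)
  obtain ⟨hv₀, hw₀⟩ := mul_ne_zero_iff.mp hne₀
  have h₀₁ := natDegree_mul hv₀ hw₁
  have h₁₀ := natDegree_mul hv₁ hw₀
  rw [natDegree_mul hv₀ hw₀] at h₀
  rw [natDegree_mul hv₁ hw₁] at h₂
  have heq : (v 0 * w 1).natDegree = (v 1 * w 0).natDegree := by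
    by_contra hlt
    rcases lt_or_gt_of_ne hlt with hlt | hlt
    · rw [natDegree_add_eq_right_of_natDegree_lt hlt] at h₁
      omega
    · rw [natDegree_add_eq_left_of_natDegree_lt hlt] at h₁
      omega
  have hw : (w 0).natDegree = (w 1).natDegree + 1 := by omega
  rw [maxDegree, Fin.univ_succ]
  simp [hw]

end SymProd

section Unimodular

variable {ι A : Type*} [CommRing A]

/-- A vector is unimodular if its entries generate the unit ideal; over `k[X]`, this says that
they have no common factor. -/
def Unimodular (v : ι → A) : Prop :=
  Ideal.span (Set.range v) = ⊤

theorem unimodular_iff_forall_isMaximal {v : ι → A} :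
    Unimodular v ↔ ∀ I : Ideal A, I.IsMaximal → Ideal.Quotient.mk I ∘ v ≠ 0 := by
  rw [Unimodular, ← not_iff_not, not_forall, ← Ne, Ideal.ne_top_iff_exists_maximal]
  refine exists_congr fun I => ?_
  rw [Classical.not_imp, not_not, Ideal.span_le, Set.range_subset_iff, funext_iff]
  simp only [SetLike.mem_coe, Function.comp_apply, Pi.zero_apply, Ideal.Quotient.eq_zero_iff_mem]

theorem Unimodular.ne_zero [Nontrivial A] {v : ι → A} (hv : Unimodular v) : v ≠ 0 := by
  rintro rfl
  obtain ⟨I, hI⟩ := Ideal.exists_maximal A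
  exact unimodular_iff_forall_isMaximal.mp hv I hI (funext fun _ => _root_.map_zero _)

theorem unimodular_of_isCoprime {a b : A} (h : IsCoprime a b) : Unimodular ![a, b] := by
  rw [Unimodular, Matrix.range_cons_cons_empty, Ideal.eq_top_iff_one, Ideal.mem_span_pair]
  exact h

theorem Unimodular.map {B : Type*} [CommRing B] {v : ι → A} (hv : Unimodular v) (f : A →+* B) :
    Unimodular (f ∘ v) := by
  rw [Unimodular, Set.range_comp, ← Ideal.map_span, hv, Ideal.map_top]

theorem Unimodular.symProd {v w : Fin 2 → A} (hv : Unimodular v) (hw : Unimodular w) :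
    Unimodular (symProd v w) := by
  refine unimodular_iff_forall_isMaximal.mpr fun I hI => ?_
  rw [map_symProd]
  exact symProd_ne_zero (unimodular_iff_forall_isMaximal.mp hv I hI)
    (unimodular_iff_forall_isMaximal.mp hw I hI)

theorem Unimodular.units_smul {v : ι → A} (hv : Unimodular v) (u : Aˣ) : Unimodular (u • v) := by
  refine top_unique (hv.symm.trans_le (Ideal.span_le.mpr ?_))
  rintro _ ⟨i, rfl⟩
  have hi : (u • v) i ∈ Ideal.span (Set.range (u • v)) := Ideal.subset_span ⟨i, rfl⟩
  simpa [Units.smul_def] using Ideal.mul_mem_left _ (↑u⁻¹ : A) hi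

theorem Unimodular.exists_sum_eq_one {v : ι → A} (hv : Unimodular v) :
    ∃ (s : Finset ι) (a : ι → A), ∑ i ∈ s, a i * v i = 1 := by
  obtain ⟨a, ha⟩ := Finsupp.mem_ideal_span_range_iff_exists_finsupp.mp
    (hv ▸ Submodule.mem_top : (1 : A) ∈ Ideal.span (Set.range v))
  exact ⟨a.support, a, ha⟩

theorem Unimodular.exists_smul_eq {v w : ι → A} (hv : Unimodular v)
    (h : ∀ i j, v i * w j = v j * w i) : ∃ c : A, w = c • v := by
  obtain ⟨s, a, ha⟩ := hv.exists_sum_eq_one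
  refine ⟨∑ i ∈ s, a i * w i, funext fun j => ?_⟩
  calc w j = (∑ i ∈ s, a i * v i) * w j := by rw [ha, one_mul]
    _ = (∑ i ∈ s, a i * w i) * v j := by
        simp only [Finset.sum_mul, mul_assoc, h _ j, mul_comm (w _) (v j)]

theorem Unimodular.exists_units_smul_eq {v w : ι → A} (hv : Unimodular v)
    (hw : Unimodular w) (h : ∀ i j, v i * w j = v j * w i) : ∃ u : Aˣ, w = u • v := by
  obtain ⟨c, rfl⟩ := hv.exists_smul_eq h
  obtain ⟨s, a, ha⟩ := hw.exists_sum_eq_one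
  have hc : c * ∑ i ∈ s, a i * v i = 1 := by
    simpa only [Pi.smul_apply, smul_eq_mul, mul_left_comm, ← Finset.mul_sum] using ha
  exact ⟨.mkOfMulEqOne c _ hc, rfl⟩

end Unimodular

section AddSub

variable {R S : Type*} [CommRing R] [CommRing S]

/-- The map `(x(P) x(Q) : x(P) + x(Q) : 1) ↦ (x(P+Q) x(P-Q) : x(P+Q) + x(P-Q) : 1)` on coordinate
vectors. -/
noncomputable def addSubVec (W : WeierstrassCurve R) (v : Fin 3 → R) : Fin 3 → R :=
  fun i => MvPolynomial.eval v (W.addSubMap i)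

variable (W : WeierstrassCurve R)

theorem addSubVec_eq (v : Fin 3 → R) :
    addSubVec W v = ![v 0 ^ 2 - W.b₄ * v 0 * v 2 - W.b₆ * v 1 * v 2 - W.b₈ * v 2 ^ 2,
      2 * v 1 * v 0 + W.b₂ * v 0 * v 2 + W.b₄ * v 1 * v 2 + W.b₆ * v 2 ^ 2,
      v 1 ^ 2 - 4 * v 0 * v 2] := by
  ext i
  fin_cases i <;> simp [addSubVec, addSubMap]

theorem addSubVec_smul (c : R) (v : Fin 3 → R) : addSubVec W (c • v) = c ^ 2 • addSubVec W v := by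
  ext i
  fin_cases i <;>
    simp only [addSubVec_eq, Pi.smul_apply, smul_eq_mul, Fin.zero_eta, Fin.mk_one, Fin.reduceFinMk,
      Matrix.cons_val] <;>
    ring

theorem map_addSubMap (f : R →+* S) (i : Fin 3) :
    (W.map f).addSubMap i = MvPolynomial.map f (W.addSubMap i) := by
  fin_cases i <;> simp [addSubMap, map_ofNat]

theorem map_addSubVec (f : R →+* S) (v : Fin 3 → R) :
    f ∘ addSubVec W v = addSubVec (W.map f) (f ∘ v) := by
  ext i
  simp only [addSubVec, Function.comp_apply, map_addSubMap, MvPolynomial.map_eval]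

instance isElliptic_baseChange [Algebra R S] [W.IsElliptic] :
    WeierstrassCurve.IsElliptic (W⁄S) :=
  inferInstanceAs (W.map (algebraMap R S)).IsElliptic

theorem Unimodular.addSubVec [W.IsElliptic] {v : Fin 3 → R} (hv : Unimodular v) :
    Unimodular (addSubVec W v) := by
  refine unimodular_iff_forall_isMaximal.mpr fun I hI => ?_
  rw [map_addSubVec]
  exact (W.map (Ideal.Quotient.mk I)).addSubMap_ne_zero
    (unimodular_iff_forall_isMaximal.mp hv I hI)

theorem maxDegree_addSubVec [IsReduced R] [W.IsElliptic] {v : Fin 3 → R[X]} (hv : v ≠ 0) :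
    maxDegree (addSubVec (W⁄R[X]) v) = 2 * maxDegree v := by
  rw [← maxDegree_aeval W.isHomogeneous_addSubMap (fun _ => W.addSubMap_ne_zero) hv]
  congr 1 with i : 1
  rw [MvPolynomial.aeval_def, ← MvPolynomial.eval_map, ← map_addSubMap]
  rfl

end AddSub

section GroupLaw

variable {R : Type*} [CommRing R]

/-- The numerator of the `x`-coordinate of `(x₁, y₁) + (x₂, y₂)` over the denominator
`(x₁ - x₂) ^ 2`. -/
def addXNum (W : Affine R) (x₁ x₂ y₁ y₂ : R) : R :=
  (y₁ - y₂) ^ 2 + W.a₁ * (y₁ - y₂) * (x₁ - x₂) - (W.a₂ + x₁ + x₂) * (x₁ - x₂) ^ 2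

theorem addXNum_self_X (W : Affine R) (x y₁ y₂ : R) : addXNum W x x y₁ y₂ = (y₁ - y₂) ^ 2 := by
  rw [addXNum]
  ring

theorem addXNum_baseChange {A B : Type*} [CommRing A] [CommRing B] [Algebra R A] [Algebra R B]
    (W : WeierstrassCurve R) (f : A →ₐ[R] B) (x₁ x₂ y₁ y₂ : A) :
    addXNum (W⁄B) (f x₁) (f x₂) (f y₁) (f y₂) = f (addXNum (W⁄A) x₁ x₂ y₁ y₂) := by
  have ha₁ : (W⁄B).a₁ = f (W⁄A).a₁ := (f.commutes W.a₁).symm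
  have ha₂ : (W⁄B).a₂ = f (W⁄A).a₂ := (f.commutes W.a₂).symm
  simp only [addXNum, ha₁, ha₂, map_sub, map_add, map_mul, map_pow]

theorem addX_slope_eq {K : Type*} [Field K] [DecidableEq K] (W : Affine K) {x₁ x₂ : K} (y₁ y₂ : K)
    (hx : x₁ ≠ x₂) :
    W.addX x₁ x₂ (W.slope x₁ x₂ y₁ y₂) = addXNum W x₁ x₂ y₁ y₂ / (x₁ - x₂) ^ 2 := by
  have hx' : x₁ - x₂ ≠ 0 := sub_ne_zero.mpr hx
  rw [slope_of_X_ne hx, addX, addXNum]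
  field_simp
  ring

section Identities

variable {W : Affine R} {x₁ x₂ y₁ y₂ : R}

theorem addSubVec_zero_mul (h₁ : W.Equation x₁ y₁) (h₂ : W.Equation x₂ y₂) :
    addSubVec W ![x₁ * x₂, x₁ + x₂, 1] 0 * (x₁ - x₂) ^ 2 =
      addXNum W x₁ x₂ y₁ y₂ * addXNum W x₁ x₂ y₁ (W.negY x₂ y₂) := by
  rw [equation_iff] at h₁ h₂
  simp only [addSubVec_eq, Matrix.cons_val, addXNum, negY, b₄, b₆, b₈]
  grind

theorem addSubVec_one_eq (h₁ : W.Equation x₁ y₁) (h₂ : W.Equation x₂ y₂) :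
    addSubVec W ![x₁ * x₂, x₁ + x₂, 1] 1 =
      addXNum W x₁ x₂ y₁ y₂ + addXNum W x₁ x₂ y₁ (W.negY x₂ y₂) := by
  rw [equation_iff] at h₁ h₂
  simp only [addSubVec_eq, Matrix.cons_val, addXNum, negY, b₂, b₄, b₆]
  grind

theorem addSubVec_two_eq (W : Affine R) (x₁ x₂ : R) :
    addSubVec W ![x₁ * x₂, x₁ + x₂, 1] 2 = (x₁ - x₂) ^ 2 := by
  simp only [addSubVec_eq, Matrix.cons_val]
  ring

theorem addSubVec_zero_self (h : W.Equation x₁ y₁) :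
    addSubVec W ![x₁ * x₁, x₁ + x₁, 1] 0 =
      (3 * x₁ ^ 2 + 2 * W.a₂ * x₁ + W.a₄ - W.a₁ * y₁) ^ 2 +
        W.a₁ * (3 * x₁ ^ 2 + 2 * W.a₂ * x₁ + W.a₄ - W.a₁ * y₁) * (y₁ - W.negY x₁ y₁) -
          (W.a₂ + x₁ + x₁) * (y₁ - W.negY x₁ y₁) ^ 2 := by
  rw [equation_iff] at h
  simp only [addSubVec_eq, Matrix.cons_val, negY, b₄, b₆, b₈]
  grind

theorem addSubVec_one_self (h : W.Equation x₁ y₁) :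
    addSubVec W ![x₁ * x₁, x₁ + x₁, 1] 1 = (y₁ - W.negY x₁ y₁) ^ 2 := by
  rw [addSubVec_one_eq h h, addXNum_self_X, addXNum_self_X, sub_self]
  ring

end Identities

theorem addSubVec_sym2x_zero {W : Affine R} (P : W.Point) :
    addSubVec W (P.sym2x 0) = P.sym2x P := by
  ext i
  rcases P with _ | ⟨x, y, h⟩ <;> fin_cases i <;>
    simp only [addSubVec_eq, ← Point.zero_def, Point.sym2x_zero_zero, Point.sym2x_some_zero,
      Point.sym2x_some_some, Fin.zero_eta, Fin.mk_one, Fin.reduceFinMk, Matrix.cons_val] <;>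
    ring

variable {K : Type*} [Field K] [DecidableEq K] {W : Affine K}

theorem exists_addSubVec_sym2x_self (P : W.Point) :
    ∃ c : K, addSubVec W (P.sym2x P) = c • (P + P).sym2x 0 := by
  rcases P with _ | ⟨x, y, h⟩
  · refine ⟨1, ?_⟩
    rw [← Point.zero_def, addSubVec_sym2x_zero, add_zero, one_smul]
  have hone := addSubVec_one_self h.1
  have htwo := addSubVec_two_eq W x x
  rw [sub_self] at htwo
  rw [Point.sym2x_some_some]
  by_cases hy : y = W.negY x y
  · refine ⟨addSubVec W ![x * x, x + x, 1] 0, ?_⟩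
    rw [Point.add_self_of_Y_eq hy, Point.sym2x_zero_zero]
    rw [sub_eq_zero.mpr hy] at hone
    ext i
    fin_cases i <;> simp [hone, htwo]
  · have hy' : y - W.negY x y ≠ 0 := sub_ne_zero.mpr hy
    refine ⟨(y - W.negY x y) ^ 2, ?_⟩
    rw [Point.add_self_of_Y_ne hy, Point.sym2x_some_zero, slope_of_Y_ne rfl hy, addX]
    ext i
    fin_cases i
    · simp only [Fin.zero_eta, addSubVec_zero_self h.1, Pi.smul_apply, Matrix.cons_val, smul_eq_mul]
      field_simp
      ring
    · simp [hone]
    · simp [htwo]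

theorem addSubVec_sym2x_of_X_ne {x₁ x₂ y₁ y₂ : K} (h₁ : W.Nonsingular x₁ y₁)
    (h₂ : W.Nonsingular x₂ y₂) (hx : x₁ ≠ x₂) :
    addSubVec W ((Point.some x₁ y₁ h₁).sym2x (.some x₂ y₂ h₂)) = (x₁ - x₂) ^ 2 •
      (Point.some x₁ y₁ h₁ + .some x₂ y₂ h₂).sym2x (.some x₁ y₁ h₁ - .some x₂ y₂ h₂) := by
  have hx' : x₁ - x₂ ≠ 0 := sub_ne_zero.mpr hx
  have hzero := addSubVec_zero_mul h₁.1 h₂.1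
  rw [sub_eq_add_neg (Point.some x₁ y₁ h₁), Point.neg_some, Point.add_of_X_ne hx,
    Point.add_of_X_ne hx, Point.sym2x_some_some, Point.sym2x_some_some, addX_slope_eq W _ _ hx,
    addX_slope_eq W _ _ hx]
  ext i
  fin_cases i
  · simp only [Fin.zero_eta, Pi.smul_apply, Matrix.cons_val, smul_eq_mul]
    field_simp
    exact hzero
  · simp only [Fin.mk_one, addSubVec_one_eq h₁.1 h₂.1, Pi.smul_apply, Matrix.cons_val, smul_eq_mul]
    field_simp
  · simp [addSubVec_two_eq]

theorem exists_addSubVec_sym2x_eq [W.IsElliptic] (P Q : W.Point) :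
    ∃ c : K, c ≠ 0 ∧ addSubVec W (P.sym2x Q) = c • (P + Q).sym2x (P - Q) := by
  suffices h : ∃ c : K, addSubVec W (P.sym2x Q) = c • (P + Q).sym2x (P - Q) by
    obtain ⟨c, hc⟩ := h
    refine ⟨c, ?_, hc⟩
    rintro rfl
    exact W.addSubMap_ne_zero (P.sym2x_ne_zero Q) (hc.trans (zero_smul ..))
  by_cases hPQ : P = Q
  · rw [← hPQ, sub_self]
    exact exists_addSubVec_sym2x_self P
  by_cases hPQ' : P = -Q
  · obtain rfl : Q = -P := by rw [hPQ', neg_neg]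
    rw [Point.sym2x_neg_right, add_neg_cancel, sub_neg_eq_add, Point.sym2x_comm 0]
    exact exists_addSubVec_sym2x_self P
  match P, Q with
  | P, 0 => exact ⟨1, by rw [add_zero, sub_zero, one_smul, addSubVec_sym2x_zero]⟩
  | 0, Q =>
    refine ⟨1, ?_⟩
    rw [zero_add, zero_sub, one_smul, Point.sym2x_neg_right, Point.sym2x_comm, addSubVec_sym2x_zero]
  | .some x₁ y₁ h₁, .some x₂ y₂ h₂ =>
    have hx : x₁ ≠ x₂ := fun hx => (Point.X_eq_iff.mp hx).elim hPQ hPQ'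
    exact ⟨_, addSubVec_sym2x_of_X_ne h₁ h₂ hx⟩

end GroupLaw

section PrimitiveRep

variable {ι A K : Type*} [CommRing A] [Field K] [Algebra A K]

/-- `v` is a vector of homogeneous coordinates, without common factor in `A`, for the point of
projective space over `K` with homogeneous coordinates `V`. -/
def IsPrimitiveRep (v : ι → A) (V : ι → K) : Prop :=
  Unimodular v ∧ ∃ c : K, c ≠ 0 ∧ algebraMap A K ∘ v = c • V

namespace IsPrimitiveRep

theorem of_smul {v : ι → A} {V : ι → K} {c : K} (hc : c ≠ 0) (h : IsPrimitiveRep v (c • V)) :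
    IsPrimitiveRep v V := by
  obtain ⟨hv, d, hd, hdV⟩ := h
  exact ⟨hv, d * c, mul_ne_zero hd hc, by rw [hdV, smul_smul]⟩

theorem units_smul {v : ι → A} {V : ι → K} (h : IsPrimitiveRep v V) (u : Aˣ) :
    IsPrimitiveRep (u • v) V := by
  obtain ⟨hv, c, hc, hcV⟩ := h
  have hu : algebraMap A K u ≠ 0 := (u.isUnit.map (algebraMap A K)).ne_zero
  refine ⟨hv.units_smul u, algebraMap A K u * c, mul_ne_zero hu hc, ?_⟩
  rw [mul_smul, ← hcV]
  ext i
  simp [Units.smul_def]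

theorem exists_units_smul_eq [FaithfulSMul A K] {v w : ι → A} {V : ι → K}
    (hv : IsPrimitiveRep v V) (hw : IsPrimitiveRep w V) : ∃ u : Aˣ, w = u • v := by
  obtain ⟨hv, c, -, hcV⟩ := hv
  obtain ⟨hw, d, -, hdV⟩ := hw
  refine hv.exists_units_smul_eq hw fun i j => FaithfulSMul.algebraMap_injective A K ?_
  have hv' : ∀ i, algebraMap A K (v i) = c * V i := congrFun hcV
  have hw' : ∀ i, algebraMap A K (w i) = d * V i := congrFun hdV
  simp only [map_mul, hv', hw']
  ring

theorem symProd {v w : Fin 2 → A} {V W : Fin 2 → K} (hv : IsPrimitiveRep v V)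
    (hw : IsPrimitiveRep w W) : IsPrimitiveRep (symProd v w) (symProd V W) := by
  obtain ⟨hv, c, hc, hcV⟩ := hv
  obtain ⟨hw, d, hd, hdW⟩ := hw
  exact ⟨hv.symProd hw, c * d, mul_ne_zero hc hd, by rw [map_symProd, hcV, hdW, symProd_smul]⟩

theorem addSubVec {R : Type*} [CommRing R] [Algebra R A] [Algebra R K] [IsScalarTower R A K]
    {W : WeierstrassCurve R} [W.IsElliptic] {v : Fin 3 → A} {V : Fin 3 → K}
    (h : IsPrimitiveRep v V) : IsPrimitiveRep (addSubVec (W⁄A) v) (addSubVec (W⁄K) V) := by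
  obtain ⟨hv, c, hc, hcV⟩ := h
  refine ⟨hv.addSubVec (W⁄A), c ^ 2, pow_ne_zero 2 hc, ?_⟩
  have hW : WeierstrassCurve.map (W⁄A) (algebraMap A K) = W⁄K :=
    W.map_baseChange (IsScalarTower.toAlgHom R A K)
  rw [map_addSubVec, hcV, addSubVec_smul, hW]

theorem exists_of_mul_eq [IsDomain A] [IsPrincipalIdealRing A] [FaithfulSMul A K] {a b : A} {z : K}
    (hb : b ≠ 0) (h : algebraMap A K b * z = algebraMap A K a) :
    ∃ v : Fin 2 → A, IsPrimitiveRep v ![z, 1] := by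
  obtain ⟨b', a', d, hab, rfl, rfl⟩ := UniqueFactorizationMonoid.exists_reduced_factors b hb a
  have hinj := FaithfulSMul.algebraMap_injective A K
  have hd : algebraMap A K d ≠ 0 := (map_ne_zero_iff _ hinj).mpr (left_ne_zero_of_mul hb)
  have hb' : algebraMap A K b' ≠ 0 := (map_ne_zero_iff _ hinj).mpr (right_ne_zero_of_mul hb)
  refine ⟨![a', b'], unimodular_of_isCoprime hab.isCoprime.symm, algebraMap A K b', hb', ?_⟩
  have hz : algebraMap A K b' * z = algebraMap A K a' := by
    rw [map_mul, map_mul, mul_assoc] at h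
    exact mul_left_cancel₀ hd h
  ext i
  fin_cases i <;> simp [hz]

end IsPrimitiveRep

end PrimitiveRep

section SumNumerator

variable {A K : Type*} [CommRing A] [Field K] [Algebra A K] [DecidableEq K]

theorem IsPrimitiveRep.algebraMap_mul_eq_addXNum {W : Affine K} {x₁ x₂ y₁ y₂ : K}
    {h₁ : W.Nonsingular x₁ y₁} {h₂ : W.Nonsingular x₂ y₂} (hx : x₁ ≠ x₂) {v : Fin 2 → A}
    (hv : IsPrimitiveRep v (Point.some x₁ y₁ h₁ + .some x₂ y₂ h₂).xRep) {b : A}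
    (hb : algebraMap A K (v 1 * b) = (x₁ - x₂) ^ 2) :
    algebraMap A K (v 0 * b) = addXNum W x₁ x₂ y₁ y₂ := by
  obtain ⟨-, c, -, hc⟩ := hv
  rw [Point.add_of_X_ne hx, Point.xRep_some, addX_slope_eq W _ _ hx] at hc
  have hv₀ : algebraMap A K (v 0) = c * (addXNum W x₁ x₂ y₁ y₂ / (x₁ - x₂) ^ 2) := congrFun hc 0
  have hv₁ : algebraMap A K (v 1) = c * 1 := congrFun hc 1
  have hx' : (x₁ - x₂) ^ 2 ≠ 0 := pow_ne_zero 2 (sub_ne_zero.mpr hx)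
  rw [map_mul, hv₁, mul_one] at hb
  rw [map_mul, hv₀, mul_right_comm, hb, mul_div_cancel₀ _ hx']

end SumNumerator

section Height

variable {ι k K : Type*} [Field k] [Field K] [Algebra k[X] K]

variable (k) in
/-- The height over `k(X)` of the projective point with homogeneous coordinates `V`: the largest
degree of the entries of a primitive vector of coordinates. It is set to `0` when there is no
such vector. -/
noncomputable def projHeight [Fintype ι] (V : ι → K) : ℕ :=
  sInf {n | ∃ v : ι → k[X], IsPrimitiveRep v V ∧ maxDegree v = n}

theorem IsPrimitiveRep.projHeight_eq [Fintype ι] [FaithfulSMul k[X] K] {v : ι → k[X]} {V : ι → K}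
    (hv : IsPrimitiveRep v V) : projHeight k V = maxDegree v := by
  have hset : {n | ∃ v : ι → k[X], IsPrimitiveRep v V ∧ maxDegree v = n} = {maxDegree v} := by
    refine Set.eq_singleton_iff_unique_mem.mpr ⟨⟨v, hv, rfl⟩, ?_⟩
    rintro _ ⟨w, hw, rfl⟩
    obtain ⟨u, rfl⟩ := hv.exists_units_smul_eq hw
    exact maxDegree_units_smul u v
  rw [projHeight, hset, csInf_singleton]

theorem isPrimitiveRep_X_pow (n : ℕ) :
    IsPrimitiveRep ![(X : k[X]) ^ n, 1] ![algebraMap k[X] K X ^ n, 1] := by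
  refine ⟨unimodular_of_isCoprime isCoprime_one_right, 1, one_ne_zero, ?_⟩
  ext i
  fin_cases i <;> simp

theorem maxDegree_X_pow (n : ℕ) : maxDegree ![(X : k[X]) ^ n, 1] = n := by
  refine maxDegree_eq_of_coeff_ne_zero (fun i => ?_) (Function.ne_iff.mpr ⟨0, by simp⟩)
  fin_cases i <;> simp

variable [Algebra k K] [IsScalarTower k k[X] K] [DecidableEq K]
  {E : WeierstrassCurve k} [E.IsElliptic]

theorem IsPrimitiveRep.sym2x_add_sub {P Q : (E⁄K).Point} {v w : Fin 2 → k[X]}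
    (hv : IsPrimitiveRep v P.xRep) (hw : IsPrimitiveRep w Q.xRep) :
    IsPrimitiveRep (HasseBound.addSubVec (E⁄k[X]) (HasseBound.symProd v w))
      ((P + Q).sym2x (P - Q)) := by
  obtain ⟨c, hc, hPQ⟩ := exists_addSubVec_sym2x_eq P Q
  exact of_smul hc (hPQ ▸ (hv.symProd hw).addSubVec)

theorem IsPrimitiveRep.exists_symProd_eq [FaithfulSMul k[X] K] {P Q : (E⁄K).Point}
    {v w v' w' : Fin 2 → k[X]} (hv : IsPrimitiveRep v P.xRep) (hw : IsPrimitiveRep w Q.xRep)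
    (hv' : IsPrimitiveRep v' (P + Q).xRep) (hw' : IsPrimitiveRep w' (P - Q).xRep) :
    ∃ u : Fin 2 → k[X], IsPrimitiveRep u (P - Q).xRep ∧
      HasseBound.symProd v' u = HasseBound.addSubVec (E⁄k[X]) (HasseBound.symProd v w) := by
  obtain ⟨c, hc⟩ := (hv'.symProd hw').exists_units_smul_eq (hv.sym2x_add_sub hw)
  refine ⟨c • w', hw'.units_smul c, ?_⟩
  rw [hc, Units.smul_def, Units.smul_def, ← one_mul (c : k[X]), ← symProd_smul, one_smul, one_mul]

theorem projHeight_add_projHeight_sub [FaithfulSMul k[X] K] {P Q : (E⁄K).Point}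
    {v w v' w' : Fin 2 → k[X]} (hv : IsPrimitiveRep v P.xRep) (hw : IsPrimitiveRep w Q.xRep)
    (hv' : IsPrimitiveRep v' (P + Q).xRep) (hw' : IsPrimitiveRep w' (P - Q).xRep) :
    projHeight k (P + Q).xRep + projHeight k (P - Q).xRep =
      2 * projHeight k P.xRep + 2 * projHeight k Q.xRep := by
  obtain ⟨u, hu, hsymProd⟩ := hv.exists_symProd_eq hw hv' hw'
  rw [hv.projHeight_eq, hw.projHeight_eq, hv'.projHeight_eq, hu.projHeight_eq,
    ← maxDegree_symProd hv'.1.ne_zero hu.1.ne_zero, hsymProd,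
    maxDegree_addSubVec E (hv.1.symProd hw.1).ne_zero,
    maxDegree_symProd hv.1.ne_zero hw.1.ne_zero, mul_add]

end Height

section Conj

variable {R : Type*} [CommRing R]

theorem polynomial_comp_negPolynomial (W : Affine R) :
    W.polynomial.comp W.negPolynomial = W.polynomial := by
  simp only [Affine.polynomial, negPolynomial, sub_comp, add_comp, mul_comp, pow_comp, X_comp,
    C_comp]
  ring

theorem negPolynomial_comp_negPolynomial (W : Affine R) :
    W.negPolynomial.comp W.negPolynomial = X := by
  simp only [negPolynomial, sub_comp, neg_comp, X_comp, C_comp]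
  ring

theorem aeval_mk (W : Affine R) (f g : R[X][X]) :
    aeval (CoordinateRing.mk W g) f = CoordinateRing.mk W (f.comp g) := by
  rw [CoordinateRing.mk, ← AdjoinRoot.aeval_eq, ← aeval_comp, AdjoinRoot.aeval_eq]

/-- The hyperelliptic involution of the coordinate ring, `Y ↦ -Y - a₁X - a₃` over `R[X]`. On points
it is negation. -/
noncomputable def conj (W : Affine R) : W.CoordinateRing →ₐ[R[X]] W.CoordinateRing :=
  AdjoinRoot.liftAlgHom W.polynomial (Algebra.ofId R[X] W.CoordinateRing)
    (CoordinateRing.mk W W.negPolynomial) <| by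
      rw [Algebra.toRingHom_ofId, ← aeval_def, aeval_mk, polynomial_comp_negPolynomial,
        AdjoinRoot.mk_self]

theorem conj_mk (W : Affine R) (f : R[X][X]) :
    conj W (CoordinateRing.mk W f) = CoordinateRing.mk W (f.comp W.negPolynomial) := by
  rw [← aeval_mk]
  exact AdjoinRoot.liftAlgHom_mk ..

theorem conj_conj (W : Affine R) (r : W.CoordinateRing) : conj W (conj W r) = r := by
  induction r using AdjoinRoot.induction_on with
  | ih f => rw [conj_mk, conj_mk, comp_assoc, negPolynomial_comp_negPolynomial, comp_X]

theorem not_two_a₁_a₃_eq_zero [Nontrivial R] (W : Affine R) [W.IsElliptic] :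
    ¬((2 : R) = 0 ∧ W.a₁ = 0 ∧ W.a₃ = 0) := by
  rintro ⟨h2, h₁, h₃⟩
  refine W.isUnit_Δ.ne_zero ?_
  simp only [Δ, b₂, b₄, b₆, b₈, h₁, h₃]
  linear_combination -8 * (4 * W.a₂ ^ 3 * W.a₆ - W.a₂ ^ 2 * W.a₄ ^ 2 - 18 * W.a₂ * W.a₄ * W.a₆ +
    4 * W.a₄ ^ 3 + 27 * W.a₆ ^ 2) * h2

theorem exists_algebraMap_eq_of_conj_eq [IsDomain R] {W : Affine R} [W.IsElliptic]
    {r : W.CoordinateRing} (hr : conj W r = r) : ∃ p, algebraMap R[X] W.CoordinateRing p = r := by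
  obtain ⟨p, q, rfl⟩ := CoordinateRing.exists_smul_basis_eq r
  have hdiff : (q * (C W.a₁ * X + C W.a₃)) • (1 : W.CoordinateRing) +
      (q * 2) • CoordinateRing.mk W X = 0 := by
    rw [map_add, map_smul, map_smul, map_one, conj_mk, X_comp, ← sub_eq_zero] at hr
    rw [← neg_eq_zero, ← hr]
    simp only [CoordinateRing.smul, negPolynomial, map_sub, map_neg, map_mul, map_ofNat]
    ring
  obtain ⟨hone, hY⟩ := CoordinateRing.smul_basis_eq_zero hdiff
  have hq : q = 0 := by
    by_contra hq
    have htwo : (2 : R[X]) = 0 := (mul_eq_zero.mp hY).resolve_left hq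
    have hlin : C W.a₁ * X + C W.a₃ = 0 := (mul_eq_zero.mp hone).resolve_left hq
    refine not_two_a₁_a₃_eq_zero W ⟨C_injective (by rwa [map_ofNat, map_zero]), ?_, ?_⟩
    · simpa using congrArg (coeff · 1) hlin
    · simpa using congrArg (coeff · 0) hlin
  exact ⟨p, by rw [hq, zero_smul, add_zero, Algebra.algebraMap_eq_smul_one]⟩

end Conj

section FunctionField

variable {k : Type*} [Field k] (W : Affine k)

theorem conj_injective : Function.Injective (conj W) :=
  Function.LeftInverse.injective (conj_conj W)

theorem algebraMap_comp_conj_injective :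
    Function.Injective ((IsScalarTower.toAlgHom k[X] W.CoordinateRing W.FunctionField).comp
      (conj W)) :=
  (FaithfulSMul.algebraMap_injective W.CoordinateRing W.FunctionField).comp (conj_injective W)

/-- The hyperelliptic involution of the function field. -/
noncomputable def functionFieldConj : W.FunctionField →ₐ[k[X]] W.FunctionField :=
  IsFractionRing.liftAlgHom (algebraMap_comp_conj_injective W)

theorem functionFieldConj_algebraMap (r : W.CoordinateRing) :
    functionFieldConj W (algebraMap _ _ r) = algebraMap W.CoordinateRing _ (conj W r) := by
  rw [functionFieldConj, IsFractionRing.liftAlgHom_apply]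
  exact IsFractionRing.lift_algebraMap (algebraMap_comp_conj_injective W) r

variable {W} in
theorem exists_mul_eq_of_functionFieldConj_eq [W.IsElliptic] {z : W.FunctionField}
    (hz : functionFieldConj W z = z) :
    ∃ a b : k[X], b ≠ 0 ∧ algebraMap _ W.FunctionField b * z = algebraMap _ _ a := by
  obtain ⟨r, t, ht, rfl⟩ := IsFractionRing.div_surjective (A := W.CoordinateRing) z
  have hinj := FaithfulSMul.algebraMap_injective W.CoordinateRing W.FunctionField
  have ht₀ : t ≠ 0 := nonZeroDivisors.ne_zero ht
  have hct₀ : conj W t ≠ 0 := (map_ne_zero_iff _ (conj_injective W)).mpr ht₀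
  have ht₁ : algebraMap _ W.FunctionField t ≠ 0 := (map_ne_zero_iff _ hinj).mpr ht₀
  have hct₁ : algebraMap _ W.FunctionField (conj W t) ≠ 0 := (map_ne_zero_iff _ hinj).mpr hct₀
  have hfix : conj W r * t = r * conj W t := hinj <| by
    rwa [map_div₀, functionFieldConj_algebraMap, functionFieldConj_algebraMap,
      div_eq_div_iff hct₁ ht₁, ← map_mul, ← map_mul] at hz
  obtain ⟨a, ha⟩ := exists_algebraMap_eq_of_conj_eq (r := r * conj W t) (by
    rw [map_mul, conj_conj, hfix])
  obtain ⟨b, hb⟩ := exists_algebraMap_eq_of_conj_eq (r := t * conj W t) (by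
    rw [map_mul, conj_conj, mul_comm])
  refine ⟨a, b, ?_, ?_⟩
  · rintro rfl
    exact mul_ne_zero ht₀ hct₀ (hb.symm.trans (map_zero _))
  · rw [IsScalarTower.algebraMap_apply k[X] W.CoordinateRing W.FunctionField, hb,
      IsScalarTower.algebraMap_apply k[X] W.CoordinateRing W.FunctionField, ha, map_mul, map_mul]
    field_simp

end FunctionField

section GenericPoint

variable {R A : Type*} [CommRing R] [CommRing A] [Algebra R A]

theorem equation_baseChange_iff (W : WeierstrassCurve R) (x y : A) :
    (W⁄A).Equation x y ↔
      W.toAffine.polynomial.eval₂ ((aeval x : R[X] →ₐ[R] A) : R[X] →+* A) y = 0 := by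
  have hmap : (W⁄A).polynomial = W.toAffine.polynomial.map (mapRingHom (algebraMap R A)) :=
    map_polynomial (W := W.toAffine) _
  rw [Equation, hmap, ← eval₂_eval₂RingHom_apply]
  rfl

theorem equation_coordinateRing (W : Affine R) :
    (W⁄W.CoordinateRing).Equation (algebraMap R[X] W.CoordinateRing X)
      (CoordinateRing.mk W X) := by
  have haeval : ((aeval (algebraMap R[X] W.CoordinateRing X) : R[X] →ₐ[R] W.CoordinateRing) :
      R[X] →+* W.CoordinateRing) = algebraMap R[X] W.CoordinateRing := by
    ext a
    · simp only [RingHom.comp_apply, RingHom.coe_coe, aeval_C]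
      rfl
    · exact aeval_X _
  rw [equation_baseChange_iff, haeval, ← aeval_def, aeval_mk, comp_X, CoordinateRing.mk,
    AdjoinRoot.mk_self]

/-- Evaluation of functions at a point of the affine curve with coordinates in `A`. -/
noncomputable def evalAt {W : Affine R} {x y : A} (h : (W⁄A).Equation x y) :
    W.CoordinateRing →ₐ[R] A :=
  AdjoinRoot.liftAlgHom W.polynomial (aeval x) y ((equation_baseChange_iff W x y).mp h)

theorem evalAt_algebraMap {W : Affine R} {x y : A} (h : (W⁄A).Equation x y) (a : R[X]) :
    evalAt h (algebraMap R[X] W.CoordinateRing a) = aeval x a :=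
  AdjoinRoot.liftAlgHom_of ..

theorem evalAt_mk_Y {W : Affine R} {x y : A} (h : (W⁄A).Equation x y) :
    evalAt h (CoordinateRing.mk W X) = y :=
  AdjoinRoot.liftAlgHom_root ..

theorem negY_coordinateRing (W : Affine R) :
    (W⁄W.CoordinateRing).negY (algebraMap R[X] W.CoordinateRing X) (CoordinateRing.mk W X) =
      conj W (CoordinateRing.mk W X) := by
  have ha₁ : (W⁄W.CoordinateRing).a₁ = CoordinateRing.mk W (C (C W.a₁)) := rfl
  have ha₃ : (W⁄W.CoordinateRing).a₃ = CoordinateRing.mk W (C (C W.a₃)) := rfl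
  have hX : algebraMap R[X] W.CoordinateRing X = CoordinateRing.mk W (C X) := rfl
  rw [conj_mk, X_comp, negPolynomial, negY, ha₁, ha₃, hX]
  simp only [map_sub, map_neg, map_add, map_mul]
  ring

theorem evalAt_conj_mk_Y {W : Affine R} {x y : A} (h : (W⁄A).Equation x y) :
    evalAt h (conj W (CoordinateRing.mk W X)) = (W⁄A).negY x y := by
  rw [← negY_coordinateRing, ← W.baseChange_negY (evalAt h), evalAt_algebraMap, evalAt_mk_Y,
    aeval_X]

end GenericPoint

section AntiInvariant

variable {k : Type*} [Field k] (W : Affine k)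

theorem equation_functionField :
    (W⁄W.FunctionField).Equation (algebraMap k[X] W.FunctionField X)
      (algebraMap W.CoordinateRing W.FunctionField (CoordinateRing.mk W X)) := by
  rw [IsScalarTower.algebraMap_apply k[X] W.CoordinateRing W.FunctionField]
  exact (equation_coordinateRing W).baseChange
    (IsScalarTower.toAlgHom k W.CoordinateRing W.FunctionField)

theorem negY_functionField :
    (W⁄W.FunctionField).negY (algebraMap k[X] W.FunctionField X)
        (algebraMap W.CoordinateRing W.FunctionField (CoordinateRing.mk W X)) =
      algebraMap W.CoordinateRing W.FunctionField (conj W (CoordinateRing.mk W X)) := by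
  rw [← negY_coordinateRing, IsScalarTower.algebraMap_apply k[X] W.CoordinateRing W.FunctionField]
  exact W.baseChange_negY (IsScalarTower.toAlgHom k W.CoordinateRing W.FunctionField) ..

/-- The point `(X, Y)` of the curve over its own function field. -/
noncomputable def genericPoint [W.IsElliptic] : (W⁄W.FunctionField).Point :=
  .some _ _ (equation_iff_nonsingular.mp (equation_functionField W))

theorem isPrimitiveRep_genericPoint [W.IsElliptic] :
    IsPrimitiveRep ![(X : k[X]), 1] (genericPoint W).xRep := by
  simpa [genericPoint] using isPrimitiveRep_X_pow (K := W.FunctionField) 1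

variable [DecidableEq W.FunctionField]

/-- The points of the curve over its function field that the hyperelliptic involution maps to their
negatives. Their `x`-coordinates lie in `k(X)`. -/
noncomputable def antiInvariant : AddSubgroup (W⁄W.FunctionField).Point :=
  (Point.map (W' := W) (functionFieldConj W) + AddMonoidHom.id _).ker

variable {W}

theorem mem_antiInvariant {P : (W⁄W.FunctionField).Point} :
    P ∈ antiInvariant W ↔ Point.map (W' := W) (functionFieldConj W) P = -P :=
  eq_neg_iff_add_eq_zero.symm

variable [W.IsElliptic]

theorem exists_isPrimitiveRep_of_mem {P : (W⁄W.FunctionField).Point} (hP : P ∈ antiInvariant W) :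
    ∃ v : Fin 2 → k[X], IsPrimitiveRep v P.xRep := by
  rw [mem_antiInvariant] at hP
  rcases P with _ | ⟨x, y, h⟩
  · refine ⟨![1, 0], unimodular_of_isCoprime isCoprime_one_left, 1, one_ne_zero, ?_⟩
    ext i
    fin_cases i <;> simp [← Point.zero_def]
  · rw [Point.map_some, Point.neg_some] at hP
    obtain ⟨a, b, hb, hab⟩ := exists_mul_eq_of_functionFieldConj_eq (Point.some.inj hP).1
    exact IsPrimitiveRep.exists_of_mul_eq hb hab

theorem parallelogramLaw_projHeight :
    ParallelogramLaw fun P : antiInvariant W => (projHeight k P.1.xRep : ℤ) := by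
  intro P Q
  obtain ⟨_, hP⟩ := exists_isPrimitiveRep_of_mem P.2
  obtain ⟨_, hQ⟩ := exists_isPrimitiveRep_of_mem Q.2
  obtain ⟨_, hadd⟩ := exists_isPrimitiveRep_of_mem (P + Q).2
  obtain ⟨_, hsub⟩ := exists_isPrimitiveRep_of_mem (P - Q).2
  simp only [AddSubgroup.coe_add, AddSubgroup.coe_sub]
  exact_mod_cast projHeight_add_projHeight_sub hP hQ hadd hsub

theorem map_functionFieldConj_genericPoint :
    Point.map (W' := W) (functionFieldConj W) (genericPoint W) = -genericPoint W := by
  have hX : functionFieldConj W (algebraMap k[X] W.FunctionField X) = algebraMap _ _ X :=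
    AlgHom.commutes ..
  simp only [genericPoint, Point.map_some, Point.neg_some, hX, functionFieldConj_algebraMap,
    negY_functionField]

theorem exists_neg_genericPoint_eq (W : Affine k) [W.IsElliptic] :
    ∃ h, -genericPoint W = .some (algebraMap k[X] W.FunctionField X)
      (algebraMap W.CoordinateRing W.FunctionField (conj W (CoordinateRing.mk W X))) h := by
  have hneg := (nonsingular_neg ..).mpr
    (equation_iff_nonsingular.mp (equation_functionField W))
  refine ⟨negY_functionField W ▸ hneg, ?_⟩
  simp only [genericPoint, Point.neg_some, negY_functionField]

theorem genericPoint_mem : genericPoint W ∈ antiInvariant W :=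
  mem_antiInvariant.mpr map_functionFieldConj_genericPoint

end AntiInvariant

section Frobenius

variable {F : Type*} [Field F] [Fintype F]

/-- The `q`-power Frobenius endomorphism on the points over an extension of a field with `q`
elements. -/
noncomputable def frobenius (W : Affine F) (K : Type*) [Field K] [Algebra F K] [DecidableEq K] :
    (W⁄K).Point →+ (W⁄K).Point :=
  Point.map (W' := W) (FiniteField.frobeniusAlgHom F K)

variable {W : Affine F} [DecidableEq W.FunctionField]

theorem frobenius_mem {P : (W⁄W.FunctionField).Point} (hP : P ∈ antiInvariant W) :
    frobenius W _ P ∈ antiInvariant W := by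
  have hcomm : Point.map (W' := W) (functionFieldConj W) (frobenius W _ P) =
      frobenius W _ (Point.map (W' := W) (functionFieldConj W) P) := by
    rcases P with _ | ⟨x, y, h⟩
    · rfl
    · simp only [frobenius, Point.map_some, FiniteField.frobeniusAlgHom_apply, map_pow]
  rw [mem_antiInvariant] at hP ⊢
  rw [hcomm, hP, map_neg]

end Frobenius

section DegreeCount

variable {k : Type*} [Field k] (W : WeierstrassCurve k) (n : ℕ)

theorem natDegree_addSubVec_X_pow_zero :
    (addSubVec (W⁄k[X]) (symProd ![X ^ n, 1] ![X, 1]) 0).natDegree = 2 * n + 2 := by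
  have hb₄ : (W⁄k[X]).b₄ = C W.b₄ := map_b₄ ..
  have hb₆ : (W⁄k[X]).b₆ = C W.b₆ := map_b₆ ..
  have hb₈ : (W⁄k[X]).b₈ = C W.b₈ := map_b₈ ..
  have heq : addSubVec (W⁄k[X]) (symProd ![X ^ n, 1] ![X, 1]) 0 =
      X ^ (2 * n + 2) - (C W.b₄ * X ^ (n + 1) + C W.b₆ * (X ^ n + X) + C W.b₈) := by
    simp only [addSubVec_eq, symProd, Matrix.cons_val, hb₄, hb₆, hb₈]
    ring
  have hlower : (C W.b₄ * X ^ (n + 1) + C W.b₆ * (X ^ n + X) + C W.b₈).natDegree ≤ n + 1 := by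
    compute_degree
  rw [heq, natDegree_sub_eq_left_of_natDegree_lt (by rw [natDegree_X_pow]; omega), natDegree_X_pow]

theorem natDegree_addSubVec_X_pow_one_le (hn : 1 ≤ n) :
    (addSubVec (W⁄k[X]) (symProd ![X ^ n, 1] ![X, 1]) 1).natDegree ≤ 2 * n + 1 := by
  have hb₂ : (W⁄k[X]).b₂ = C W.b₂ := map_b₂ ..
  have hb₄ : (W⁄k[X]).b₄ = C W.b₄ := map_b₄ ..
  have hb₆ : (W⁄k[X]).b₆ = C W.b₆ := map_b₆ ..
  simp only [addSubVec_eq, symProd, Matrix.cons_val, hb₄, hb₆, hb₂, mul_one, one_mul, one_pow]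
  compute_degree
  omega

theorem addSubVec_X_pow_two :
    addSubVec (W⁄k[X]) (symProd ![X ^ n, 1] ![X, 1]) 2 = (X ^ n - X) ^ 2 := by
  simp only [addSubVec_eq, symProd, Matrix.cons_val]
  ring

end DegreeCount

section Fiber

theorem setOf_equation_eq {K : Type*} [Field K] {W : Affine K} {x y : K} (h : W.Equation x y) :
    {y' | W.Equation x y'} = {y, W.negY x y} := by
  ext y'
  simp only [Set.mem_ofPred_eq, Set.mem_insert_iff, Set.mem_singleton_iff]
  refine ⟨fun h' => Y_eq_of_X_eq h' h rfl, ?_⟩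
  rintro (rfl | rfl)
  exacts [h, (W.equation_neg x y).mpr h]

theorem exists_equation {L : Type*} [Field L] [IsAlgClosed L] (W : Affine L) (x : L) :
    ∃ y, W.Equation x y := by
  obtain ⟨y, hy⟩ := IsAlgClosed.exists_root (W.polynomial.map (evalRingHom x)) <| by
    rw [degree_eq_natDegree (monic_polynomial.map _).ne_zero, monic_polynomial.natDegree_map,
      natDegree_polynomial]
    decide
  exact ⟨y, by rwa [IsRoot, map_evalRingHom_eval] at hy⟩

theorem card_point_eq_sum_ncard {F : Type*} [Field F] [Fintype F] (W : Affine F) [W.IsElliptic]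
    [Fintype W.Point] : Fintype.card W.Point = ∑ x, {y | W.Equation x y}.ncard + 1 := by
  have hcard : Nat.card {xy : F × F // W.Equation xy.1 xy.2} =
      ∑ x, {y | W.Equation x y}.ncard :=
    (Nat.card_congr (Equiv.subtypeProdEquivSigmaSubtype W.Equation)).trans Nat.card_sigma
  rw [← Nat.card_eq_fintype_card, Nat.card_congr W.pointEquiv, ← hcard]
  exact Finite.card_option

end Fiber

section FiniteField

variable {F : Type*} [Field F] [Fintype F]

theorem splits_X_pow_card_sub_X : (X ^ Fintype.card F - X : F[X]).Splits := by
  rw [splits_iff_card_roots, FiniteField.roots_X_pow_card_sub_X,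
    FiniteField.X_pow_card_sub_X_natDegree_eq _ Fintype.one_lt_card]
  rfl

theorem exists_algebraMap_eq_of_pow_card_eq {L : Type*} [Field L] [Algebra F L] {y : L}
    (h : y ^ Fintype.card F = y) : ∃ z : F, algebraMap F L z = y := by
  refine splits_X_pow_card_sub_X.mem_range_of_isRoot
    (FiniteField.X_pow_card_sub_X_ne_zero _ Fintype.one_lt_card) ?_
  simp [h]

theorem rootMultiplicity_X_pow_card_sub_X (x : F) :
    (X ^ Fintype.card F - X : F[X]).rootMultiplicity x = 1 := by
  classical
  rw [← count_roots, FiniteField.roots_X_pow_card_sub_X]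
  exact Multiset.count_eq_one_of_mem Finset.univ.nodup (Finset.mem_univ x)

theorem natDegree_eq_sum_rootMultiplicity {f : F[X]} (hf : f.Splits) :
    f.natDegree = ∑ x, f.rootMultiplicity x := by
  classical
  simp only [← count_roots]
  rw [hf.natDegree_eq_card_roots, Multiset.sum_count_eq_card fun x _ => Finset.mem_univ x]

theorem algebraMap_X_pow_card_ne (W : Affine F) :
    algebraMap F[X] W.FunctionField X ^ Fintype.card F ≠ algebraMap F[X] W.FunctionField X := by
  rw [← map_pow, (FaithfulSMul.algebraMap_injective F[X] W.FunctionField).ne_iff, ← sub_ne_zero]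
  exact FiniteField.X_pow_card_sub_X_ne_zero _ Fintype.one_lt_card

end FiniteField

section FrobeniusPair

variable {F : Type*} [Field F] [Fintype F] (W : Affine F) [W.IsElliptic]
  [DecidableEq W.FunctionField]

theorem isPrimitiveRep_frobenius_genericPoint :
    IsPrimitiveRep ![(X : F[X]) ^ Fintype.card F, 1] (frobenius W _ (genericPoint W)).xRep :=
  isPrimitiveRep_X_pow (Fintype.card F)

variable {W}

theorem algebraMap_mul_eq_addXNum_of_isPrimitiveRep {y₂ : W.CoordinateRing}
    (h₂ : (W⁄W.FunctionField).Nonsingular (algebraMap F[X] W.FunctionField X)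
      (algebraMap W.CoordinateRing W.FunctionField y₂)) {w : Fin 2 → F[X]}
    (hw : IsPrimitiveRep w (frobenius W _ (genericPoint W) + .some _ _ h₂).xRep) {b : F[X]}
    (hb : w 1 * b = (X ^ Fintype.card F - X) ^ 2) :
    algebraMap F[X] W.CoordinateRing (w 0 * b) =
      addXNum (W⁄W.CoordinateRing) (algebraMap F[X] _ X ^ Fintype.card F) (algebraMap F[X] _ X)
        (CoordinateRing.mk W X ^ Fintype.card F) y₂ := by
  apply FaithfulSMul.algebraMap_injective W.CoordinateRing W.FunctionField
  refine Eq.trans ?_ (addXNum_baseChange W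
    (IsScalarTower.toAlgHom F W.CoordinateRing W.FunctionField) ..)
  simp only [IsScalarTower.toAlgHom_apply, map_pow, ← IsScalarTower.algebraMap_apply]
  refine hw.algebraMap_mul_eq_addXNum (algebraMap_X_pow_card_ne W) ?_
  rw [hb, map_pow, map_sub, map_pow]

theorem eval_mul_of_isPrimitiveRep {y₂ : W.CoordinateRing}
    (h₂ : (W⁄W.FunctionField).Nonsingular (algebraMap F[X] W.FunctionField X)
      (algebraMap W.CoordinateRing W.FunctionField y₂)) {w : Fin 2 → F[X]}
    (hw : IsPrimitiveRep w (frobenius W _ (genericPoint W) + .some _ _ h₂).xRep) {b : F[X]}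
    (hb : w 1 * b = (X ^ Fintype.card F - X) ^ 2) {L : Type*} [Field L] [Algebra F L] {x : F}
    {y : L} (hxy : (W⁄L).Equation (algebraMap F L x) y) :
    algebraMap F L ((w 0 * b).eval x) = (y ^ Fintype.card F - evalAt hxy y₂) ^ 2 := by
  have hnum := congrArg (evalAt hxy) (algebraMap_mul_eq_addXNum_of_isPrimitiveRep h₂ hw hb)
  rw [evalAt_algebraMap, aeval_algebraMap_apply, ← addXNum_baseChange, map_pow, map_pow,
    evalAt_algebraMap, evalAt_mk_Y, aeval_X, ← map_pow, FiniteField.pow_card,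
    addXNum_self_X] at hnum
  simpa using hnum

variable (W)

/-- Primitive coordinate vectors for the `x`-coordinates of `(π + 1)P` and `(π - 1)P`, where `π` is
the Frobenius and `P` the generic point, scaled so that their symmetric product is given by the
addition formulas without a further constant. -/
structure IsFrobeniusPair (v u : Fin 2 → F[X]) : Prop where
  add : IsPrimitiveRep v (frobenius W _ (genericPoint W) + genericPoint W).xRep
  sub : IsPrimitiveRep u (frobenius W _ (genericPoint W) - genericPoint W).xRep
  symProd_eq : symProd v u = addSubVec (W⁄F[X]) (symProd ![X ^ Fintype.card F, 1] ![X, 1])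

theorem exists_isFrobeniusPair : ∃ v u : Fin 2 → F[X], IsFrobeniusPair W v u := by
  have hπ := frobenius_mem (genericPoint_mem (W := W))
  obtain ⟨v, hv⟩ := exists_isPrimitiveRep_of_mem (add_mem hπ genericPoint_mem)
  obtain ⟨u', hu'⟩ := exists_isPrimitiveRep_of_mem (sub_mem hπ genericPoint_mem)
  obtain ⟨u, hu, huv⟩ := (isPrimitiveRep_frobenius_genericPoint W).exists_symProd_eq
    (isPrimitiveRep_genericPoint W) hv hu'
  exact ⟨v, u, hv, hu, huv⟩

namespace IsFrobeniusPair

variable {W} {v u : Fin 2 → F[X]}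

theorem one_mul_one (h : IsFrobeniusPair W v u) : v 1 * u 1 = (X ^ Fintype.card F - X) ^ 2 :=
  (congrFun h.symProd_eq 2).trans (addSubVec_X_pow_two ..)

theorem one_mul_one_ne_zero (h : IsFrobeniusPair W v u) : v 1 * u 1 ≠ 0 :=
  h.one_mul_one ▸ pow_ne_zero 2 (FiniteField.X_pow_card_sub_X_ne_zero _ Fintype.one_lt_card)

theorem maxDegree_sub_eq (h : IsFrobeniusPair W v u) : maxDegree u = (u 1).natDegree + 1 := by
  have htwo : symProd v u 2 = (X ^ Fintype.card F - X) ^ 2 := h.one_mul_one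
  refine maxDegree_eq_natDegree_add_one (v := v) (n := 2 * Fintype.card F) ?_ ?_ ?_ ?_
  · rw [h.symProd_eq, natDegree_addSubVec_X_pow_zero]
  · rw [h.symProd_eq]
    exact natDegree_addSubVec_X_pow_one_le W _ Fintype.card_pos
  · rw [htwo, natDegree_pow, FiniteField.X_pow_card_sub_X_natDegree_eq _ Fintype.one_lt_card]
  · exact h.one_mul_one_ne_zero

theorem rootMultiplicity_add_rootMultiplicity (h : IsFrobeniusPair W v u) (x : F) :
    (v 1).rootMultiplicity x + (u 1).rootMultiplicity x = 2 := by
  have hne : (X ^ Fintype.card F - X : F[X]) ≠ 0 :=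
    FiniteField.X_pow_card_sub_X_ne_zero _ Fintype.one_lt_card
  rw [← rootMultiplicity_mul h.one_mul_one_ne_zero, h.one_mul_one, sq,
    rootMultiplicity_mul (mul_ne_zero hne hne), rootMultiplicity_X_pow_card_sub_X]

variable {x : F} {L : Type*} [Field L] [Algebra F L]

theorem eval_zero_mul_one (h : IsFrobeniusPair W v u) {y : L}
    (hxy : (W⁄L).Equation (algebraMap F L x) y) :
    algebraMap F L ((v 0 * u 1).eval x) = (y ^ Fintype.card F - y) ^ 2 := by
  rw [eval_mul_of_isPrimitiveRep _ h.add h.one_mul_one hxy, evalAt_mk_Y]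

theorem eval_one_mul_zero (h : IsFrobeniusPair W v u) {y : L}
    (hxy : (W⁄L).Equation (algebraMap F L x) y) :
    algebraMap F L ((v 1 * u 0).eval x) =
      (y ^ Fintype.card F - (W⁄L).negY (algebraMap F L x) y) ^ 2 := by
  obtain ⟨_, hneg⟩ := exists_neg_genericPoint_eq W
  have hsub := h.sub
  rw [sub_eq_add_neg, hneg] at hsub
  rw [mul_comm, eval_mul_of_isPrimitiveRep _ hsub ((mul_comm ..).trans h.one_mul_one) hxy,
    evalAt_conj_mk_Y]

theorem eval_zero_mul_one_self (h : IsFrobeniusPair W v u) {y : F} (hxy : W.Equation x y) :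
    (v 0 * u 1).eval x = 0 := by
  have hxy' : (W⁄F).Equation (algebraMap F F x) y :=
    (W.map_equation (algebraMap F F).injective x y).mpr hxy
  have heval := h.eval_zero_mul_one hxy'
  rwa [FiniteField.pow_card, sub_self, zero_pow two_ne_zero] at heval

theorem eval_one_mul_zero_self (h : IsFrobeniusPair W v u) {y : F} (hxy : W.Equation x y) :
    (v 1 * u 0).eval x = (y - W.negY x y) ^ 2 := by
  have hxy' : (W⁄F).Equation (algebraMap F F x) y :=
    (W.map_equation (algebraMap F F).injective x y).mpr hxy
  have heval := h.eval_one_mul_zero hxy'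
  rwa [FiniteField.pow_card] at heval

theorem eval_one_mul_one (h : IsFrobeniusPair W v u) (x : F) : (v 1).eval x * (u 1).eval x = 0 := by
  rw [← eval_mul, h.one_mul_one]
  simp [FiniteField.pow_card]

theorem isRoot_sub_of_equation (h : IsFrobeniusPair W v u) {y : F} (hxy : W.Equation x y) :
    (u 1).IsRoot x := by
  have h₀₁ := h.eval_zero_mul_one_self hxy
  have h₁₁ := h.eval_one_mul_one x
  rw [eval_mul] at h₀₁
  by_contra hu₁
  refine (h.add.1.map (evalRingHom x)).ne_zero (funext fun i => ?_)
  fin_cases i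
  exacts [(mul_eq_zero.mp h₀₁).resolve_right hu₁, (mul_eq_zero.mp h₁₁).resolve_right hu₁]

theorem isRoot_add_iff_of_equation (h : IsFrobeniusPair W v u) {y : F} (hxy : W.Equation x y) :
    (v 1).IsRoot x ↔ y = W.negY x y := by
  have h₁₀ := h.eval_one_mul_zero_self hxy
  have hu₁ : (u 1).eval x = 0 := h.isRoot_sub_of_equation hxy
  have hu₀ : (u 0).eval x ≠ 0 := fun hu₀ =>
    (h.sub.1.map (evalRingHom x)).ne_zero (funext fun i => by fin_cases i; exacts [hu₀, hu₁])
  rw [← sub_eq_zero, ← sq_eq_zero_iff, ← h₁₀, eval_mul, mul_eq_zero_iff_right hu₀, IsRoot.def]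

theorem rootMultiplicity_sub_of_equation (h : IsFrobeniusPair W v u) {y : F}
    (hxy : W.Equation x y) : (u 1).rootMultiplicity x = ({y, W.negY x y} : Set F).ncard := by
  have hadd := h.rootMultiplicity_add_rootMultiplicity x
  by_cases hy : y = W.negY x y
  · obtain ⟨hv₁, hu₁⟩ := mul_ne_zero_iff.mp h.one_mul_one_ne_zero
    have hv : 0 < (v 1).rootMultiplicity x :=
      (rootMultiplicity_pos hv₁).mpr ((h.isRoot_add_iff_of_equation hxy).mpr hy)
    have hu : 0 < (u 1).rootMultiplicity x :=
      (rootMultiplicity_pos hu₁).mpr (h.isRoot_sub_of_equation hxy)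
    rw [← hy, Set.pair_eq_singleton, Set.ncard_singleton]
    omega
  · have hv : (v 1).rootMultiplicity x = 0 :=
      rootMultiplicity_eq_zero (mt (h.isRoot_add_iff_of_equation hxy).mp hy)
    rw [Set.ncard_pair hy]
    omega

theorem rootMultiplicity_sub_eq_zero (h : IsFrobeniusPair W v u) (hx : ∀ y, ¬W.Equation x y) :
    (u 1).rootMultiplicity x = 0 := by
  obtain ⟨y, hxy⟩ := exists_equation (W⁄(AlgebraicClosure F)) (algebraMap F _ x)
  refine rootMultiplicity_eq_zero fun hroot => ?_
  have heval := h.eval_zero_mul_one hxy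
  rw [eval_mul, IsRoot.def.mp hroot, mul_zero, map_zero, eq_comm, sq_eq_zero_iff,
    sub_eq_zero] at heval
  obtain ⟨z, rfl⟩ := exists_algebraMap_eq_of_pow_card_eq heval
  exact hx z ((W.map_equation (algebraMap F _).injective x z).mp hxy)

theorem rootMultiplicity_sub_eq_ncard (h : IsFrobeniusPair W v u) (x : F) :
    (u 1).rootMultiplicity x = {y | W.Equation x y}.ncard := by
  by_cases hx : ∃ y, W.Equation x y
  · obtain ⟨y, hxy⟩ := hx
    rw [setOf_equation_eq hxy, h.rootMultiplicity_sub_of_equation hxy]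
  · have hempty : {y | W.Equation x y} = ∅ := Set.eq_empty_of_forall_notMem (not_exists.mp hx)
    rw [hempty, Set.ncard_empty, h.rootMultiplicity_sub_eq_zero (not_exists.mp hx)]

theorem splits_sub (h : IsFrobeniusPair W v u) : (u 1).Splits :=
  ((splits_X_pow_card_sub_X (F := F)).pow 2).of_dvd
    (h.one_mul_one ▸ h.one_mul_one_ne_zero) (h.one_mul_one ▸ dvd_mul_left _ _)

end IsFrobeniusPair

theorem projHeight_frobenius_sub_genericPoint [Fintype W.Point] :
    projHeight F (frobenius W _ (genericPoint W) - genericPoint W).xRep = Fintype.card W.Point := by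
  obtain ⟨v, u, h⟩ := exists_isFrobeniusPair W
  rw [h.sub.projHeight_eq, h.maxDegree_sub_eq, natDegree_eq_sum_rootMultiplicity h.splits_sub,
    card_point_eq_sum_ncard]
  simp only [h.rootMultiplicity_sub_eq_ncard]

end FrobeniusPair

end HasseBound

open HasseBound in
theorem hasse_bound_general {F : Type*} [Field F] [Fintype F] (E : WeierstrassCurve F)
    [E.IsElliptic] [Fintype E.toAffine.Point] :
    |(Fintype.card F : ℝ) + 1 - Fintype.card E.toAffine.Point| ≤ 2 * √(Fintype.card F) := by
  classical
  let P := genericPoint E.toAffine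
  let πP := frobenius E.toAffine _ P
  have hP : projHeight F P.xRep = 1 := by
    rw [(isPrimitiveRep_genericPoint E).projHeight_eq, ← maxDegree_X_pow (k := F) 1, pow_one]
  have hπP : projHeight F πP.xRep = Fintype.card F := by
    rw [(isPrimitiveRep_frobenius_genericPoint E).projHeight_eq, maxDegree_X_pow]
  have hsub : projHeight F (πP - P).xRep = Fintype.card E.toAffine.Point :=
    projHeight_frobenius_sub_genericPoint E
  have hsq := parallelogramLaw_projHeight.sq_le_four_mul (fun _ => Int.natCast_nonneg _)
    ⟨πP, frobenius_mem genericPoint_mem⟩ ⟨P, genericPoint_mem⟩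
  simp only [AddSubgroup.coe_sub, hP, hπP, hsub, Nat.cast_one, mul_one] at hsq
  calc _ ≤ √(4 * Fintype.card F) := Real.abs_le_sqrt (by exact_mod_cast hsq)
    _ = 2 * √(Fintype.card F) := by
      rw [Real.sqrt_mul (by norm_num), show (4 : ℝ) = 2 ^ 2 by norm_num, Real.sqrt_sq (by norm_num)]

/-- **Hasse bound.** Let `E` be an elliptic curve over the finite field `𝔽_p`
(`p` prime) and `a_p = p + 1 − #E(𝔽_p)`, where `#E(𝔽_p)` counts all `𝔽_p`-rational points
including the point at infinity.  Then `|a_p| ≤ 2√p`. -/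
theorem hasse_bound
    (p : ℕ) [Fact p.Prime] (E : WeierstrassCurve (ZMod p)) [E.IsElliptic]
    [Fintype E.toAffine.Point] :
    |(p : ℝ) + 1 - Fintype.card E.toAffine.Point| ≤ 2 * Real.sqrt p := by
  simpa only [ZMod.card] using hasse_bound_general E
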